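/- arXiv:1802.06665 — 7 statements merged into one kernel-verified Lean document; each statement's English description precedes it below -/
import Mathlib

section
/- For every k = 1, …, K one has (I − Ψ_P Φ_{k,P0}) (I − Ψ_P)^{-1} Ψ_α = Ψ_α. In particular, whenever I − Ψ_P Φ_{k,P0} is invertible, (I − Ψ_P Φ_{k,P0})^{-1} Ψ_α = (I − Ψ_P)^{-1} Ψ_α. -/
/-!
Write `X = (1 - ΨP)⁻¹ Ψα`, so that `ΨP X = X - Ψα`. The columns of `X` are fixed by every
`Φ_{k,P0} = ΦP k + Φ0 k`. This is clear for `k = 1`, where `Φ_{1,P0} = 1`; and if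
`Φ_{k,P0} X = X`, then, as `Π_k` is a projection fixing the columns of `Ψα`,
`Φ_{k+1,P0} X = (1 - Π_k) ΨP X + Π_k X = (1 - Π_k) (X - Ψα) + Π_k X = X`.
Consequently `(1 - ΨP Φ_{k,P0}) X = X - ΨP X = Ψα`.
-/

open Matrix

/-- The Gram matrix of a full-column-rank matrix with respect to a positive definite weight
is positive definite, hence its inverse is a genuine one and the weighted projection onto the
column space of `A` fixes `A`. -/
lemma weighted_proj_mul_self {m n : ℕ} (A : Matrix (Fin m) (Fin n) ℝ) (hA : A.rank = n)
    (W : Matrix (Fin m) (Fin m) ℝ) (hW : W.PosDef) :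
    A * (Aᵀ * W * A)⁻¹ * (Aᵀ * W) * A = A := by
  have hinj : Function.Injective A.mulVec := by
    rw [Matrix.mulVec_injective_iff, linearIndependent_iff_card_eq_finrank_span, Fintype.card_fin,
      Set.finrank, ← Matrix.rank_eq_finrank_span_cols, hA]
  have hpos : (Aᵀ * W * A).PosDef := by
    simpa [Matrix.conjTranspose_eq_transpose_of_trivial] using hW.conjTranspose_mul_mul_same hinj
  have hdet : IsUnit (Aᵀ * W * A).det := (Matrix.isUnit_iff_isUnit_det _).1 hpos.isUnit
  rw [Matrix.mul_assoc, Matrix.mul_assoc, Matrix.nonsing_inv_mul _ hdet, Matrix.mul_one]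

theorem stmt_0
    (dP dα dg K : ℕ) (hdP : 1 ≤ dP) (hdα : 1 ≤ dα) (hdg : 1 ≤ dg)
    (hda : dα ≤ dP) (hK : 1 ≤ K)
    (Ψα : Matrix (Fin dP) (Fin dα) ℝ) (hrank : Ψα.rank = dα)
    (ΨP : Matrix (Fin dP) (Fin dP) ℝ) (Ψg : Matrix (Fin dP) (Fin dg) ℝ)
    (W : ℕ → Matrix (Fin dP) (Fin dP) ℝ)
    (hW : ∀ k, 1 ≤ k → k ≤ K → (W k).PosDef)
    (ΦP Φ0 Φg : ℕ → Matrix (Fin dP) (Fin dP) ℝ)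
    (hΦP1 : ΦP 1 = 0) (hΦ01 : Φ0 1 = 1) (hΦg1 : Φg 1 = 0)
    (hrecP : ∀ k, 1 ≤ k → k < K →
      ΦP (k + 1) = (1 - Ψα * (Ψαᵀ * W k * Ψα)⁻¹ * (Ψαᵀ * W k)) * ΨP * ΦP k
        + Ψα * (Ψαᵀ * W k * Ψα)⁻¹ * (Ψαᵀ * W k))
    (hrec0 : ∀ k, 1 ≤ k → k < K →
      Φ0 (k + 1) = (1 - Ψα * (Ψαᵀ * W k * Ψα)⁻¹ * (Ψαᵀ * W k)) * ΨP * Φ0 k)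
    (hrecg : ∀ k, 1 ≤ k → k < K →
      Φg (k + 1) = (1 - Ψα * (Ψαᵀ * W k * Ψα)⁻¹ * (Ψαᵀ * W k)) * (1 + ΨP * Φg k))
    (hU1 : IsUnit (1 - ΨP)) :
    ∀ k, 1 ≤ k → k ≤ K →
      (1 - ΨP * (ΦP k + Φ0 k)) * (1 - ΨP)⁻¹ * Ψα = Ψα ∧
      (IsUnit (1 - ΨP * (ΦP k + Φ0 k)) →
        (1 - ΨP * (ΦP k + Φ0 k))⁻¹ * Ψα = (1 - ΨP)⁻¹ * Ψα) := by
  have hd : IsUnit (1 - ΨP).det := (Matrix.isUnit_iff_isUnit_det _).1 hU1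
  obtain ⟨X, hX⟩ : ∃ X, X = (1 - ΨP)⁻¹ * Ψα := ⟨_, rfl⟩
  have hΨX : ΨP * X = X - Ψα := by
    have h : (1 - ΨP) * X = Ψα := by
      rw [hX, Matrix.mul_nonsing_inv_cancel_left _ _ hd]
    rw [← h, Matrix.sub_mul, Matrix.one_mul, sub_sub_cancel]
  have hfix : ∀ k, 1 ≤ k → k ≤ K → (ΦP k + Φ0 k) * X = X := by
    intro k hk
    induction k, hk using Nat.le_induction with
    | base => intro _; rw [hΦP1, hΦ01, zero_add, Matrix.one_mul]
    | succ k hk ih =>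
      intro hkK
      have hproj := weighted_proj_mul_self Ψα hrank (W k) (hW k hk (by omega))
      rw [hrecP k hk (by omega), hrec0 k hk (by omega)]
      generalize Ψα * (Ψαᵀ * W k * Ψα)⁻¹ * (Ψαᵀ * W k) = P at hproj ⊢
      calc ((1 - P) * ΨP * ΦP k + P + (1 - P) * ΨP * Φ0 k) * X
          = (1 - P) * (ΨP * ((ΦP k + Φ0 k) * X)) + P * X := by
            simp only [Matrix.add_mul, Matrix.mul_add, Matrix.mul_assoc]
            abel
        _ = X := by
            rw [ih (by omega), hΨX, Matrix.sub_mul, Matrix.mul_sub P, hproj, Matrix.one_mul]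
            abel
  intro k hk hkK
  have hmain : (1 - ΨP * (ΦP k + Φ0 k)) * X = Ψα := by
    rw [Matrix.sub_mul, Matrix.one_mul, Matrix.mul_assoc, hfix k hk hkK, hΨX, sub_sub_cancel]
  refine ⟨by rw [Matrix.mul_assoc, ← hX, hmain], fun hU => ?_⟩
  rw [← hX]
  nth_rewrite 1 [← hmain]
  exact Matrix.nonsing_inv_mul_cancel_left _ _ ((Matrix.isUnit_iff_isUnit_det _).1 hU)
end

section
/- For every k = 1, …, K one has the matrix identity (I + Ψ_P Φ_{k,g}) (I − Ψ_P) = I − Ψ_P Φ_{k,P0}. -/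
/-! The proof is by induction on `k`. With `Φ = ΦP k + Φ0 k`, the recursions for `ΦP` and `Φ0` add
up to `Φ ↦ (1 - Π_k) ΨP Φ + Π_k`, while multiplying the recursion for `1 + ΨP Φg` on the right by
`1 - ΨP` and inserting the identity at `k` gives `(1 - ΨP) + ΨP (1 - Π_k) (1 - ΨP Φ)`. Expanding,
both sides at `k + 1` equal `1 - ΨP Π_k - ΨP (1 - Π_k) ΨP Φ`. -/

open Matrix

theorem stmt_1
    (dP dα dg K : ℕ) (hdP : 1 ≤ dP) (hdα : 1 ≤ dα) (hdg : 1 ≤ dg)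
    (hda : dα ≤ dP) (hK : 1 ≤ K)
    (Ψα : Matrix (Fin dP) (Fin dα) ℝ) (hrank : Ψα.rank = dα)
    (ΨP : Matrix (Fin dP) (Fin dP) ℝ) (Ψg : Matrix (Fin dP) (Fin dg) ℝ)
    (W : ℕ → Matrix (Fin dP) (Fin dP) ℝ)
    (hW : ∀ k, 1 ≤ k → k ≤ K → (W k).PosDef)
    (ΦP Φ0 Φg : ℕ → Matrix (Fin dP) (Fin dP) ℝ)
    (hΦP1 : ΦP 1 = 0) (hΦ01 : Φ0 1 = 1) (hΦg1 : Φg 1 = 0)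
    (hrecP : ∀ k, 1 ≤ k → k < K →
      ΦP (k + 1) = (1 - Ψα * (Ψαᵀ * W k * Ψα)⁻¹ * (Ψαᵀ * W k)) * ΨP * ΦP k
        + Ψα * (Ψαᵀ * W k * Ψα)⁻¹ * (Ψαᵀ * W k))
    (hrec0 : ∀ k, 1 ≤ k → k < K →
      Φ0 (k + 1) = (1 - Ψα * (Ψαᵀ * W k * Ψα)⁻¹ * (Ψαᵀ * W k)) * ΨP * Φ0 k)
    (hrecg : ∀ k, 1 ≤ k → k < K →
      Φg (k + 1) = (1 - Ψα * (Ψαᵀ * W k * Ψα)⁻¹ * (Ψαᵀ * W k)) * (1 + ΨP * Φg k))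
    :
    ∀ k, 1 ≤ k → k ≤ K →
      (1 + ΨP * Φg k) * (1 - ΨP) = 1 - ΨP * (ΦP k + Φ0 k) := by
  intro k hk
  induction k, hk using Nat.le_induction with
  | base => intro _; simp [hΦP1, hΦ01, hΦg1]
  | succ k hk ih =>
    intro hkK
    have ih' := ih (by omega)
    rw [hrecP k hk (by omega), hrec0 k hk (by omega), hrecg k hk (by omega)]
    -- The identity holds for any matrix in place of the projection `Π_k`.
    generalize Ψα * (Ψαᵀ * W k * Ψα)⁻¹ * (Ψαᵀ * W k) = Q
    calc (1 + ΨP * ((1 - Q) * (1 + ΨP * Φg k))) * (1 - ΨP)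
        = (1 - ΨP) + ΨP * (1 - Q) * ((1 + ΨP * Φg k) * (1 - ΨP)) := by noncomm_ring
      _ = (1 - ΨP) + ΨP * (1 - Q) * (1 - ΨP * (ΦP k + Φ0 k)) := by rw [ih']
      _ = 1 - ΨP * ((1 - Q) * ΨP * ΦP k + Q + (1 - Q) * ΨP * Φ0 k) := by noncomm_ring
end

section
/- If all the weight matrices are equal, W_1 = … = W_K = W, with Π := Ψ_α (Ψ_α^T W Ψ_α)^{-1} Ψ_α^T W, then for every K ≥ 1 one has I + Ψ_P Φ_{K,g} = Σ_{i=0}^{K−1} ( Ψ_P (I − Π) )^i (the finite geometric sum of powers of Ψ_P (I − Π)). -/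
open Matrix

theorem stmt_3
    (dP dα dg K : ℕ) (hdP : 1 ≤ dP) (hdα : 1 ≤ dα) (hdg : 1 ≤ dg)
    (hda : dα ≤ dP) (hK : 1 ≤ K)
    (Ψα : Matrix (Fin dP) (Fin dα) ℝ) (hrank : Ψα.rank = dα)
    (ΨP : Matrix (Fin dP) (Fin dP) ℝ) (Ψg : Matrix (Fin dP) (Fin dg) ℝ)
    (W : Matrix (Fin dP) (Fin dP) ℝ) (hW : W.PosDef)
    (ΦP Φ0 Φg : ℕ → Matrix (Fin dP) (Fin dP) ℝ)
    (hΦP1 : ΦP 1 = 0) (hΦ01 : Φ0 1 = 1) (hΦg1 : Φg 1 = 0)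
    (hrecP : ∀ k, 1 ≤ k → k < K →
      ΦP (k + 1) = (1 - Ψα * (Ψαᵀ * W * Ψα)⁻¹ * (Ψαᵀ * W)) * ΨP * ΦP k
        + Ψα * (Ψαᵀ * W * Ψα)⁻¹ * (Ψαᵀ * W))
    (hrec0 : ∀ k, 1 ≤ k → k < K →
      Φ0 (k + 1) = (1 - Ψα * (Ψαᵀ * W * Ψα)⁻¹ * (Ψαᵀ * W)) * ΨP * Φ0 k)
    (hrecg : ∀ k, 1 ≤ k → k < K →
      Φg (k + 1) = (1 - Ψα * (Ψαᵀ * W * Ψα)⁻¹ * (Ψαᵀ * W)) * (1 + ΨP * Φg k)) :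
    ∀ k, 1 ≤ k → k ≤ K →
      1 + ΨP * Φg k
        = ∑ i ∈ Finset.range k,
            (ΨP * (1 - Ψα * (Ψαᵀ * W * Ψα)⁻¹ * (Ψαᵀ * W))) ^ i := by
  intro k hk
  induction k, hk using Nat.le_induction with
  | base => simp [hΦg1]
  | succ k hk ih =>
    intro hkK
    -- With `A = ΨP (1 - Π)`, the recursion reads `S (k + 1) = 1 + A * S k` for
    -- `S k = 1 + ΨP * Φg k`, which is Horner's scheme for the geometric sum.
    rw [hrecg k hk (by lia), ih (by lia), ← Matrix.mul_assoc, Finset.sum_range_succ',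
      Finset.mul_sum, pow_zero, add_comm]
    simp only [pow_succ']
end

section
/- Assume I − Ψ_P and I − Ψ_P Φ_{K,P0} are invertible. Define B_K := (I + Ψ_P Φ_{K,g}) Ψ_g Ω_gg Ψ_g^T (I + Ψ_P Φ_{K,g})^T − (I + Ψ_P Φ_{K,g}) Ψ_g Ω_Pg^T (I − Ψ_P Φ_{K,P0})^T − (I − Ψ_P Φ_{K,P0}) Ω_Pg Ψ_g^T (I + Ψ_P Φ_{K,g})^T and C_K := (I − Ψ_P Φ_{K,P0})^{-1} B_K ((I − Ψ_P Φ_{K,P0})^T)^{-1}. Then C_K = C_1, i.e. C_K = (I − Ψ_P)^{-1} Ψ_g Ω_gg Ψ_g^T ((I − Ψ_P)^T)^{-1} − (I − Ψ_P)^{-1} Ψ_g Ω_Pg^T − Ω_Pg Ψ_g^T ((I − Ψ_P)^T)^{-1}; in particular C_K does not depend on K or on the weight matrices W_1, …, W_{K−1}. -/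
/-!
Write `M = 1 - ΨP`, `Φ k = ΦP k + Φ0 k`. The recursions give `Φg k * M = 1 - Φ k` by induction on `k`:
with `Π` the matrix of step `k`, both sides at `k + 1` equal `(1 - Π) * (1 - ΨP * Φ k)`. Only the
shape of the recursion matters here, not which matrix `Π` is. Hence
`(1 + ΨP * Φg K) * M = 1 - ΨP * Φ K`, that is `G * M = A`, so `G = A * M⁻¹`. Each term of `B` then
has a factor `A` on the left and `Aᵀ` on the right, and these cancel against `A⁻¹` and `(Aᵀ)⁻¹`.
-/

open Matrix

/-- One step of the recursion, for an arbitrary matrix `Q` in place of the projection. -/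
theorem recursion_step {R : Type*} [Ring R] (Q P a b g : R) (h : g * (1 - P) = 1 - (a + b)) :
    (1 - Q) * (1 + P * g) * (1 - P) = 1 - ((1 - Q) * P * a + Q + (1 - Q) * P * b) := by
  have e : (1 - Q) * (1 + P * g) * (1 - P) = (1 - Q) * (1 - P + P * (g * (1 - P))) := by
    noncomm_ring
  rw [e, h]
  noncomm_ring

theorem stmt_4
    (dP dα dg K : ℕ) (hdP : 1 ≤ dP) (hdα : 1 ≤ dα) (hdg : 1 ≤ dg)
    (hda : dα ≤ dP) (hK : 1 ≤ K)
    (Ψα : Matrix (Fin dP) (Fin dα) ℝ) (hrank : Ψα.rank = dα)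
    (ΨP : Matrix (Fin dP) (Fin dP) ℝ) (Ψg : Matrix (Fin dP) (Fin dg) ℝ)
    (W : ℕ → Matrix (Fin dP) (Fin dP) ℝ)
    (hW : ∀ k, 1 ≤ k → k ≤ K → (W k).PosDef)
    (ΦP Φ0 Φg : ℕ → Matrix (Fin dP) (Fin dP) ℝ)
    (hΦP1 : ΦP 1 = 0) (hΦ01 : Φ0 1 = 1) (hΦg1 : Φg 1 = 0)
    (hrecP : ∀ k, 1 ≤ k → k < K →
      ΦP (k + 1) = (1 - Ψα * (Ψαᵀ * W k * Ψα)⁻¹ * (Ψαᵀ * W k)) * ΨP * ΦP k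
        + Ψα * (Ψαᵀ * W k * Ψα)⁻¹ * (Ψαᵀ * W k))
    (hrec0 : ∀ k, 1 ≤ k → k < K →
      Φ0 (k + 1) = (1 - Ψα * (Ψαᵀ * W k * Ψα)⁻¹ * (Ψαᵀ * W k)) * ΨP * Φ0 k)
    (hrecg : ∀ k, 1 ≤ k → k < K →
      Φg (k + 1) = (1 - Ψα * (Ψαᵀ * W k * Ψα)⁻¹ * (Ψαᵀ * W k)) * (1 + ΨP * Φg k))
    (ΩPg : Matrix (Fin dP) (Fin dg) ℝ) (Ωgg : Matrix (Fin dg) (Fin dg) ℝ)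
    (hΩgg : Ωggᵀ = Ωgg)
    (hU1 : IsUnit (1 - ΨP)) (hUK : IsUnit (1 - ΨP * (ΦP K + Φ0 K))) :
    let A := 1 - ΨP * (ΦP K + Φ0 K)
    let G := 1 + ΨP * Φg K
    let B := G * Ψg * Ωgg * Ψgᵀ * Gᵀ - G * Ψg * ΩPgᵀ * Aᵀ - A * ΩPg * Ψgᵀ * Gᵀ
    A⁻¹ * B * (Aᵀ)⁻¹
      = (1 - ΨP)⁻¹ * Ψg * Ωgg * Ψgᵀ * ((1 - ΨP)ᵀ)⁻¹
        - (1 - ΨP)⁻¹ * Ψg * ΩPgᵀ - ΩPg * Ψgᵀ * ((1 - ΨP)ᵀ)⁻¹ := by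
  intro A G B
  have key : ∀ k, 1 ≤ k → k ≤ K → Φg k * (1 - ΨP) = 1 - (ΦP k + Φ0 k) := by
    intro k hk
    induction k, hk using Nat.le_induction with
    | base => intro _; simp [hΦP1, hΦ01, hΦg1]
    | succ k hk ih =>
      intro hkK
      rw [hrecP k hk hkK, hrec0 k hk hkK, hrecg k hk hkK]
      exact recursion_step _ _ _ _ _ (ih (Nat.le_of_succ_le hkK))
  have hGM : G * (1 - ΨP) = A := by
    have e : G * (1 - ΨP) = 1 - ΨP + ΨP * (Φg K * (1 - ΨP)) := by
      simp only [G]; noncomm_ring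
    rw [e, key K hK le_rfl]
    simp only [A]; noncomm_ring
  have hM : IsUnit (1 - ΨP).det := (isUnit_iff_isUnit_det _).1 hU1
  have hA : IsUnit A.det := (isUnit_iff_isUnit_det _).1 hUK
  have hAt : IsUnit Aᵀ.det := by rwa [det_transpose]
  have hG : G = A * (1 - ΨP)⁻¹ := by
    rw [← hGM, mul_nonsing_inv_cancel_right _ _ hM]
  have hGt : Gᵀ = ((1 - ΨP)ᵀ)⁻¹ * Aᵀ := by
    rw [hG, transpose_mul, transpose_nonsing_inv]
  have hB : B = A * ((1 - ΨP)⁻¹ * Ψg * Ωgg * Ψgᵀ * ((1 - ΨP)ᵀ)⁻¹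
        - (1 - ΨP)⁻¹ * Ψg * ΩPgᵀ - ΩPg * Ψgᵀ * ((1 - ΨP)ᵀ)⁻¹) * Aᵀ := by
    simp only [B]
    rw [hGt, hG]
    simp only [Matrix.mul_sub, Matrix.sub_mul, Matrix.mul_assoc]
  rw [hB, Matrix.mul_assoc A, nonsing_inv_mul_cancel_left _ _ hA,
    mul_nonsing_inv_cancel_right _ _ hAt]
end

section
/- (Optimal weighting of a minimum-distance / GMM sandwich.) Let Ψ be a real d_P × d_α matrix with full column rank (d_α ≤ d_P), let Δ be a symmetric positive definite real d_P × d_P matrix, and let W be a symmetric positive definite real d_P × d_P matrix. Then the d_α × d_α matrix (Ψ^T W Ψ)^{-1} Ψ^T W Δ W Ψ (Ψ^T W Ψ)^{-1} − (Ψ^T Δ^{-1} Ψ)^{-1} is positive semidefinite, and it equals the zero matrix when W = Δ^{-1}. -/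
open Matrix

/-! Any left inverse `A` of `Ψ` satisfies the Gauss–Markov identity
`A Δ Aᵀ - C = (A - C Ψᵀ Δ⁻¹) Δ (A - C Ψᵀ Δ⁻¹)ᵀ` with `C = (Ψᵀ Δ⁻¹ Ψ)⁻¹`
(`gaussMarkov_identity`), whose right-hand side is positive semidefinite. The sandwich is `A Δ Aᵀ`
for the left inverse `A = (Ψᵀ W Ψ)⁻¹ Ψᵀ W`. For `W = Δ⁻¹` this `A` is `C Ψᵀ Δ⁻¹`, and the
right-hand side vanishes. -/

theorem mulVec_injective_of_rank_eq {m n : ℕ} (Ψ : Matrix (Fin m) (Fin n) ℝ)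
    (hrank : Ψ.rank = n) : Function.Injective Ψ.mulVec := by
  rw [Matrix.mulVec_injective_iff, linearIndependent_iff_card_eq_finrank_span,
    Fintype.card_fin, Set.finrank, ← Matrix.rank_eq_finrank_span_cols, hrank]

theorem posDef_transpose_mul_mul {m n : ℕ} (Ψ : Matrix (Fin m) (Fin n) ℝ)
    (hrank : Ψ.rank = n) {S : Matrix (Fin m) (Fin m) ℝ} (hS : S.PosDef) :
    (Ψᵀ * S * Ψ).PosDef := by
  have h := hS.conjTranspose_mul_mul_same (mulVec_injective_of_rank_eq Ψ hrank)
  rwa [conjTranspose_eq_transpose_of_trivial] at h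

/-- The excess of `A Δ Aᵀ` over `C = (Ψᵀ Δ⁻¹ Ψ)⁻¹`, for `A` a left inverse of `Ψ`, as a congruence
of `Δ`; both cross terms of the expansion equal `C` because `A Ψ = 1`. -/
theorem gaussMarkov_identity {m n : ℕ} (Ψ : Matrix (Fin m) (Fin n) ℝ)
    (hrank : Ψ.rank = n) {Δ : Matrix (Fin m) (Fin m) ℝ} (hΔ : Δ.PosDef)
    (A : Matrix (Fin n) (Fin m) ℝ) (hA : A * Ψ = 1) :
    A * Δ * Aᵀ - (Ψᵀ * Δ⁻¹ * Ψ)⁻¹ =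
      (A - (Ψᵀ * Δ⁻¹ * Ψ)⁻¹ * Ψᵀ * Δ⁻¹) * Δ * (A - (Ψᵀ * Δ⁻¹ * Ψ)⁻¹ * Ψᵀ * Δ⁻¹)ᵀ := by
  have hM := posDef_transpose_mul_mul Ψ hrank hΔ.inv
  have hMdet : IsUnit (Ψᵀ * Δ⁻¹ * Ψ).det := (isUnit_iff_isUnit_det _).1 hM.isUnit
  have hΔdet : IsUnit Δ.det := (isUnit_iff_isUnit_det _).1 hΔ.isUnit
  have hΔiT : Δ⁻¹ᵀ = Δ⁻¹ := by
    simpa [conjTranspose_eq_transpose_of_trivial] using hΔ.inv.isHermitian.eq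
  have hCT : (Ψᵀ * Δ⁻¹ * Ψ)⁻¹ᵀ = (Ψᵀ * Δ⁻¹ * Ψ)⁻¹ := by
    simpa [conjTranspose_eq_transpose_of_trivial] using hM.inv.isHermitian.eq
  have hCM := nonsing_inv_mul _ hMdet
  have hA' : Ψᵀ * Aᵀ = 1 := by rw [← transpose_mul, hA, transpose_one]
  set C := (Ψᵀ * Δ⁻¹ * Ψ)⁻¹ with hC
  have hBT : (C * Ψᵀ * Δ⁻¹)ᵀ = Δ⁻¹ * Ψ * C := by
    rw [transpose_mul, transpose_mul, transpose_transpose, hΔiT, hCT, Matrix.mul_assoc]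
  have h1 : A * Δ * (Δ⁻¹ * Ψ * C) = C := by
    rw [Matrix.mul_assoc, Matrix.mul_assoc Δ⁻¹, mul_nonsing_inv_cancel_left _ _ hΔdet,
      ← Matrix.mul_assoc, hA, Matrix.one_mul]
  have h2 : C * Ψᵀ * Δ⁻¹ * Δ = C * Ψᵀ := nonsing_inv_mul_cancel_right _ _ hΔdet
  have h3 : C * Ψᵀ * Aᵀ = C := by rw [Matrix.mul_assoc, hA', Matrix.mul_one]
  have h4 : C * Ψᵀ * (Δ⁻¹ * Ψ * C) = C := by
    have : C * Ψᵀ * (Δ⁻¹ * Ψ * C) = C * (Ψᵀ * Δ⁻¹ * Ψ) * C := by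
      simp only [Matrix.mul_assoc]
    rw [this, hCM, Matrix.one_mul]
  rw [transpose_sub, hBT, Matrix.sub_mul, h2, Matrix.mul_sub, Matrix.sub_mul, Matrix.sub_mul,
    h1, h3, h4]
  abel

theorem stmt_6
    (dP dα : ℕ) (hdP : 1 ≤ dP) (hdα : 1 ≤ dα) (hda : dα ≤ dP)
    (Ψ : Matrix (Fin dP) (Fin dα) ℝ) (hrank : Ψ.rank = dα)
    (Δ W : Matrix (Fin dP) (Fin dP) ℝ) (hΔ : Δ.PosDef) (hW : W.PosDef) :
    ((Ψᵀ * W * Ψ)⁻¹ * Ψᵀ * W * Δ * W * Ψ * (Ψᵀ * W * Ψ)⁻¹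
      - (Ψᵀ * Δ⁻¹ * Ψ)⁻¹).PosSemidef ∧
    (W = Δ⁻¹ →
      (Ψᵀ * W * Ψ)⁻¹ * Ψᵀ * W * Δ * W * Ψ * (Ψᵀ * W * Ψ)⁻¹
        - (Ψᵀ * Δ⁻¹ * Ψ)⁻¹ = 0) := by
  have hM := posDef_transpose_mul_mul Ψ hrank hW
  have hMdet : IsUnit (Ψᵀ * W * Ψ).det := (isUnit_iff_isUnit_det _).1 hM.isUnit
  have hWT : Wᵀ = W := by
    simpa [conjTranspose_eq_transpose_of_trivial] using hW.isHermitian.eq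
  have hGT : (Ψᵀ * W * Ψ)⁻¹ᵀ = (Ψᵀ * W * Ψ)⁻¹ := by
    simpa [conjTranspose_eq_transpose_of_trivial] using hM.inv.isHermitian.eq
  have hA : (Ψᵀ * W * Ψ)⁻¹ * Ψᵀ * W * Ψ = 1 := by
    have h := nonsing_inv_mul _ hMdet
    simpa only [Matrix.mul_assoc] using h
  have hAT : ((Ψᵀ * W * Ψ)⁻¹ * Ψᵀ * W)ᵀ = W * Ψ * (Ψᵀ * W * Ψ)⁻¹ := by
    rw [transpose_mul, transpose_mul, transpose_transpose, hWT, hGT, Matrix.mul_assoc W Ψ]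
  have key := gaussMarkov_identity Ψ hrank hΔ _ hA
  have hS : (Ψᵀ * W * Ψ)⁻¹ * Ψᵀ * W * Δ * W * Ψ * (Ψᵀ * W * Ψ)⁻¹ =
      (Ψᵀ * W * Ψ)⁻¹ * Ψᵀ * W * Δ * ((Ψᵀ * W * Ψ)⁻¹ * Ψᵀ * W)ᵀ := by
    rw [hAT]
    simp only [Matrix.mul_assoc]
  rw [hS, key]
  constructor
  · have h := hΔ.posSemidef.mul_mul_conjTranspose_same
      ((Ψᵀ * W * Ψ)⁻¹ * Ψᵀ * W - (Ψᵀ * Δ⁻¹ * Ψ)⁻¹ * Ψᵀ * Δ⁻¹)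
    rwa [conjTranspose_eq_transpose_of_trivial] at h
  · intro h
    rw [h, sub_self, Matrix.zero_mul, Matrix.zero_mul]
end

section
/- (MLE information identity, Eq. (MLE_alpha_var).) Let Ω_PP be a symmetric positive definite d_P × d_P matrix, M_g a symmetric positive definite d_g × d_g matrix, Ψ_α a d_P × d_α matrix, Ψ_P a d_P × d_P matrix with I − Ψ_P invertible, and Ψ_g a d_P × d_g matrix. Set D_α := (I − Ψ_P)^{-1} Ψ_α and D_g := (I − Ψ_P)^{-1} Ψ_g. Then the matrices M_g + D_g^T Ω_PP^{-1} D_g and (I − Ψ_P) Ω_PP (I − Ψ_P)^T + Ψ_g M_g^{-1} Ψ_g^T are positive definite, and D_α^T Ω_PP^{-1} D_α − D_α^T Ω_PP^{-1} D_g ( M_g + D_g^T Ω_PP^{-1} D_g )^{-1} D_g^T Ω_PP^{-1} D_α = Ψ_α^T [ (I − Ψ_P) Ω_PP (I − Ψ_P)^T + Ψ_g M_g^{-1} Ψ_g^T ]^{-1} Ψ_α. -/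
open Matrix

/-! Write `B = 1 - ΨP`. Each of the two sums is a positive definite matrix plus a positive
semidefinite one, hence positive definite. Since `(B Ω Bᵀ)⁻¹ = (B⁻¹)ᵀ Ω⁻¹ B⁻¹`, the Woodbury
identity (`Matrix.add_mul_mul_inv_eq_sub`) expands the inverse on the right-hand side, and the
factors `B⁻¹ Ψα`, `B⁻¹ Ψg` that appear are exactly `Dα` and `Dg`. -/

theorem stmt_14
    (dP dα dg : ℕ) (hdP : 1 ≤ dP) (hdα : 1 ≤ dα) (hdg : 1 ≤ dg)
    (ΩPP : Matrix (Fin dP) (Fin dP) ℝ) (hΩPP : ΩPP.PosDef)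
    (Mg : Matrix (Fin dg) (Fin dg) ℝ) (hMg : Mg.PosDef)
    (Ψα : Matrix (Fin dP) (Fin dα) ℝ)
    (ΨP : Matrix (Fin dP) (Fin dP) ℝ) (hU : IsUnit (1 - ΨP))
    (Ψg : Matrix (Fin dP) (Fin dg) ℝ) :
    let Dα := (1 - ΨP)⁻¹ * Ψα
    let Dg := (1 - ΨP)⁻¹ * Ψg
    (Mg + Dgᵀ * ΩPP⁻¹ * Dg).PosDef ∧
    ((1 - ΨP) * ΩPP * (1 - ΨP)ᵀ + Ψg * Mg⁻¹ * Ψgᵀ).PosDef ∧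
    Dαᵀ * ΩPP⁻¹ * Dα
        - Dαᵀ * ΩPP⁻¹ * Dg * (Mg + Dgᵀ * ΩPP⁻¹ * Dg)⁻¹ * (Dgᵀ * ΩPP⁻¹ * Dα)
      = Ψαᵀ * ((1 - ΨP) * ΩPP * (1 - ΨP)ᵀ + Ψg * Mg⁻¹ * Ψgᵀ)⁻¹ * Ψα := by
  intro Dα Dg
  have h₁ : (Mg + Dgᵀ * ΩPP⁻¹ * Dg).PosDef := by
    have h := hΩPP.inv.posSemidef.conjTranspose_mul_mul_same Dg
    rw [conjTranspose_eq_transpose_of_trivial] at h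
    exact hMg.add_posSemidef h
  have hA : ((1 - ΨP) * ΩPP * (1 - ΨP)ᵀ).PosDef := by
    have h := hΩPP.mul_mul_conjTranspose_same (vecMul_injective_of_isUnit hU)
    rwa [conjTranspose_eq_transpose_of_trivial] at h
  have h₂ : ((1 - ΨP) * ΩPP * (1 - ΨP)ᵀ + Ψg * Mg⁻¹ * Ψgᵀ).PosDef := by
    have h := hMg.inv.posSemidef.mul_mul_conjTranspose_same Ψg
    rw [conjTranspose_eq_transpose_of_trivial] at h
    exact hA.add_posSemidef h
  refine ⟨h₁, h₂, ?_⟩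
  have hAinv : ((1 - ΨP) * ΩPP * (1 - ΨP)ᵀ)⁻¹
      = ((1 - ΨP)⁻¹)ᵀ * ΩPP⁻¹ * (1 - ΨP)⁻¹ := by
    rw [Matrix.mul_inv_rev, Matrix.mul_inv_rev, transpose_nonsing_inv, Matrix.mul_assoc]
  have hMM : Mg⁻¹⁻¹ = Mg := nonsing_inv_nonsing_inv _ ((isUnit_iff_isUnit_det _).1 hMg.isUnit)
  have hmid : Mg⁻¹⁻¹ + Ψgᵀ * ((1 - ΨP) * ΩPP * (1 - ΨP)ᵀ)⁻¹ * Ψg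
      = Mg + Dgᵀ * ΩPP⁻¹ * Dg := by
    rw [hMM, hAinv]
    simp only [Dg, transpose_mul, Matrix.mul_assoc]
  rw [add_mul_mul_inv_eq_sub _ _ _ _ hA.isUnit hMg.inv.isUnit (hmid ▸ h₁.isUnit), hmid, hAinv]
  generalize (Mg + Dgᵀ * ΩPP⁻¹ * Dg)⁻¹ = K
  simp only [Dα, Dg, transpose_mul, Matrix.mul_sub, Matrix.sub_mul, Matrix.mul_assoc]
end

section
/- (Closed form of the optimally-weighted policy-iteration recursion, Eq. (phi_kp1_appendix).) Let Ω be a symmetric positive definite d_P × d_P matrix, Ψ_α a d_P × d_α matrix with full column rank, Ψ_P a d_P × d_P matrix with I − Ψ_P invertible, and Φ a d_P × d_P matrix such that I − Ψ_P Φ is invertible and (I − Ψ_P Φ)^{-1} Ψ_α = (I − Ψ_P)^{-1} Ψ_α. Define W := ((I − Ψ_P Φ)^T)^{-1} Ω^{-1} (I − Ψ_P Φ)^{-1}, q_α := −Ψ_α^T ((I − Ψ_P)^T)^{-1} Ω^{-1} (I − Ψ_P)^{-1} Ψ_α, and Π := Ψ_α (Ψ_α^T W Ψ_α)^{-1} Ψ_α^T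 W. Then q_α is invertible, Ψ_α^T W Ψ_α = −q_α, and (I − Π) Ψ_P Φ + Π = Ψ_P Φ − Ψ_α q_α^{-1} Ψ_α^T ((I − Ψ_P)^T)^{-1} Ω^{-1}. -/
/-!
Write `Y = (1 - ΨP)⁻¹ Ψα`, which by hypothesis is also `(1 - ΨP Φ)⁻¹ Ψα`. Transposing,
`Ψαᵀ Wm = Yᵀ Ω⁻¹ (1 - ΨP Φ)⁻¹`, so that `Ψαᵀ Wm Ψα = Yᵀ Ω⁻¹ Y = -qα`. This Gram matrix is positive
definite, because `Ω⁻¹` is and `Y` has trivial kernel (`Ψα` has full column rank); hence `qα` is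
invertible. Finally `(1 - Π) ΨP Φ + Π = ΨP Φ + Π (1 - ΨP Φ)`, and the trailing factor cancels the
inverse in `Ψαᵀ Wm`.
-/


open Matrix

lemma mulVec_injective_of_rank_eq_s15 {m n : ℕ} (A : Matrix (Fin m) (Fin n) ℝ) (h : A.rank = n) :
    Function.Injective A.mulVec := by
  have h1 := LinearMap.finrank_range_add_finrank_ker A.mulVecLin
  have h2 : Module.finrank ℝ (LinearMap.range A.mulVecLin) = n := h
  rw [h2, Module.finrank_fin_fun] at h1
  have h3 : LinearMap.ker A.mulVecLin = ⊥ := Submodule.finrank_eq_zero.mp (by omega)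
  exact LinearMap.ker_eq_bot.mp h3

theorem stmt_15
    (dP dα : ℕ) (hdP : 1 ≤ dP) (hdα : 1 ≤ dα) (hda : dα ≤ dP)
    (Ω : Matrix (Fin dP) (Fin dP) ℝ) (hΩ : Ω.PosDef)
    (Ψα : Matrix (Fin dP) (Fin dα) ℝ) (hrank : Ψα.rank = dα)
    (ΨP Φ : Matrix (Fin dP) (Fin dP) ℝ)
    (hU1 : IsUnit (1 - ΨP)) (hUΦ : IsUnit (1 - ΨP * Φ))
    (hΦ : (1 - ΨP * Φ)⁻¹ * Ψα = (1 - ΨP)⁻¹ * Ψα) :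
    let Wm := ((1 - ΨP * Φ)ᵀ)⁻¹ * Ω⁻¹ * (1 - ΨP * Φ)⁻¹
    let qα := -(Ψαᵀ * ((1 - ΨP)ᵀ)⁻¹ * Ω⁻¹ * (1 - ΨP)⁻¹ * Ψα)
    let Pi := Ψα * (Ψαᵀ * Wm * Ψα)⁻¹ * (Ψαᵀ * Wm)
    IsUnit qα ∧ Ψαᵀ * Wm * Ψα = -qα ∧
    (1 - Pi) * ΨP * Φ + Pi
      = ΨP * Φ - Ψα * qα⁻¹ * Ψαᵀ * ((1 - ΨP)ᵀ)⁻¹ * Ω⁻¹ := by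
  intro Wm qα Pi
  set Y := (1 - ΨP)⁻¹ * Ψα with hY
  have hYA : Ψαᵀ * ((1 - ΨP)ᵀ)⁻¹ = Yᵀ := by
    rw [hY, transpose_mul, transpose_nonsing_inv]
  have hYB : Ψαᵀ * ((1 - ΨP * Φ)ᵀ)⁻¹ = Yᵀ := by
    rw [← hΦ, transpose_mul, transpose_nonsing_inv]
  have hq : qα = -(Yᵀ * Ω⁻¹ * Y) := by
    simp only [qα]
    rw [hYA, Matrix.mul_assoc _ (1 - ΨP)⁻¹ Ψα]
  have hW : Ψαᵀ * Wm = Yᵀ * Ω⁻¹ * (1 - ΨP * Φ)⁻¹ := by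
    simp only [Wm]
    rw [← hYB]
    simp only [Matrix.mul_assoc]
  have hWq : Ψαᵀ * Wm * Ψα = -qα := by
    rw [hW, Matrix.mul_assoc, hΦ, hq, neg_neg]
  have hYinj : Function.Injective Y.mulVec := by
    have hA : IsUnit (1 - ΨP)⁻¹ := isUnit_nonsing_inv_iff.mpr hU1
    have h := (mulVec_injective_of_isUnit hA).comp (mulVec_injective_of_rank_eq_s15 Ψα hrank)
    intro x y hxy
    apply h
    simpa [hY, mulVec_mulVec] using hxy
  have hpos : (Yᵀ * Ω⁻¹ * Y).PosDef := by
    simpa using hΩ.inv.conjTranspose_mul_mul_same hYinj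
  have hqU : IsUnit qα := by
    rw [hq]
    exact hpos.isUnit.neg
  have hqinv : (-qα)⁻¹ = -qα⁻¹ := by
    apply inv_eq_left_inv
    rw [neg_mul_neg, nonsing_inv_mul _ ((isUnit_iff_isUnit_det _).mp hqU)]
  have hPiB : Pi * (1 - ΨP * Φ) = -(Ψα * qα⁻¹ * Yᵀ * Ω⁻¹) := by
    simp only [Pi]
    rw [hWq, hW, hqinv, Matrix.mul_assoc, Matrix.mul_assoc (Yᵀ * Ω⁻¹),
      nonsing_inv_mul _ ((isUnit_iff_isUnit_det _).mp hUΦ)]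
    simp [Matrix.mul_assoc]
  refine ⟨hqU, hWq, ?_⟩
  calc (1 - Pi) * ΨP * Φ + Pi = ΨP * Φ + Pi * (1 - ΨP * Φ) := by noncomm_ring
    _ = _ := by
      rw [hPiB, ← sub_eq_add_neg, ← hYA]
      simp only [Matrix.mul_assoc]
end
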